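/- Under the hypotheses of the energy decay identity—F⁰ : ℝ³ → ℝ, F¹ : ℝ⁴ → ℝ continuous, L : ℝ³ → ℝ of class C² with L_u − L_px − p·L_pu − F⁰·L_pp = 0 on [0,1] × ℝ², u a bounded classical solution of u_xx = F⁰(x,u,u_x) + F¹(x,u,u_x,u_t)·u_t on (0,T) × [0,1] with L_p(ι,u(t,ι),u_x(t,ι))·u_t(t,ι) = 0 at ι ∈ {0,1}—assume additionally that L_pp(x,u,p) > 0 for all (x,u,p) and F¹(x,u,p,r) > 0 for all (x,u,p,r). Then for every t ∈ (0,T) the energy E(t) := ∫₀¹ L(x,u(t,x),u_x(t,x)) dx satisfies E′(t) ≤ 0, and E′(t) = 0 if and only if u_t(t,x) = 0 for all x ∈ [0,1]. -/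

import Mathlib

/-!
The energy identity behind the theorem is `E'(t) = -∫₀¹ L_pp F¹ u_t² dx`, whose integrand is
continuous and nonnegative, and vanishes exactly where `u_t` does.

Differentiation under the integral sign (`hasDerivAt_integral_param`) gives
`E' = ∫₀¹ (L_u u_t + L_p u_tx) dx`. Here `u_tx` is `∂_t u_x`, and the same lemma applied to
`u(t,x) - u(t,0) = ∫₀ˣ u_x dy` shows `∂_x u_t = u_tx` (`hasDerivAt_mixed`). Hence
`L_p u_t` has `x`-derivative `(L_px + L_pu u_x + L_pp u_xx) u_t + L_p u_tx`, and its integral over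
`[0,1]` vanishes by the boundary condition. Subtracting it from `E'` and inserting the PDE for
`u_xx` and the Euler equation for `L_u` leaves the claimed integrand.
-/

open Set

open MeasureTheory Topology

/-- Chain rule for a function of three real variables in terms of its partial derivatives,
along a differentiable curve `(X, V, P)`. -/
lemma chain_three {G : ℝ → ℝ → ℝ → ℝ} (hG : Differentiable ℝ ↿G) {X V P : ℝ → ℝ}
    {s X' V' P' Gx Gv Gp : ℝ}
    (hx : HasDerivAt (fun x => G x (V s) (P s)) Gx (X s))
    (hv : HasDerivAt (fun v => G (X s) v (P s)) Gv (V s))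
    (hp : HasDerivAt (fun p => G (X s) (V s) p) Gp (P s))
    (hX : HasDerivAt X X' s) (hV : HasDerivAt V V' s) (hP : HasDerivAt P P' s) :
    HasDerivAt (fun r => G (X r) (V r) (P r)) (Gx * X' + Gv * V' + Gp * P') s := by
  have hF : HasFDerivAt ↿G (fderiv ℝ ↿G (X s, V s, P s)) (X s, V s, P s) := (hG _).hasFDerivAt
  have ex : fderiv ℝ ↿G (X s, V s, P s) (1, 0, 0) = Gx :=
    (HasFDerivAt.comp_hasDerivAt (f := fun x => (x, V s, P s)) (X s) hF
      ((hasDerivAt_id _).prodMk ((hasDerivAt_const _ _).prodMk (hasDerivAt_const _ _)))).unique hx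
  have ev : fderiv ℝ ↿G (X s, V s, P s) (0, 1, 0) = Gv :=
    (HasFDerivAt.comp_hasDerivAt (f := fun v => (X s, v, P s)) (V s) hF
      ((hasDerivAt_const _ _).prodMk ((hasDerivAt_id _).prodMk (hasDerivAt_const _ _)))).unique hv
  have ep : fderiv ℝ ↿G (X s, V s, P s) (0, 0, 1) = Gp :=
    (HasFDerivAt.comp_hasDerivAt (f := fun p => (X s, V s, p)) (P s) hF
      ((hasDerivAt_const _ _).prodMk ((hasDerivAt_const _ _).prodMk (hasDerivAt_id _)))).unique hp
  have h : HasDerivAt (fun r => G (X r) (V r) (P r))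
      (fderiv ℝ ↿G (X s, V s, P s) (X', V', P')) s :=
    HasFDerivAt.comp_hasDerivAt (f := fun r => (X r, V r, P r)) s hF (hX.prodMk (hV.prodMk hP))
  have hdec : ((X', V', P') : ℝ × ℝ × ℝ) =
      X' • ((1, 0, 0) : ℝ × ℝ × ℝ) + V' • ((0, 1, 0) : ℝ × ℝ × ℝ)
        + P' • ((0, 0, 1) : ℝ × ℝ × ℝ) := by
    simp
  rw [hdec, map_add, map_add, map_smul, map_smul, map_smul, ex, ev, ep] at h
  convert h using 1
  simp only [smul_eq_mul]
  ring

lemma partial_v_eq_fderiv {G Gv : ℝ → ℝ → ℝ → ℝ} (hG : Differentiable ℝ ↿G)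
    (hv : ∀ x v p : ℝ, HasDerivAt (fun v' => G x v' p) (Gv x v p) v) :
    ↿Gv = fun q => fderiv ℝ ↿G q (0, 1, 0) := by
  funext ⟨x, v, p⟩
  exact (hv x v p).unique
    (HasFDerivAt.comp_hasDerivAt (f := fun v' => (x, v', p)) v (hG _).hasFDerivAt
      ((hasDerivAt_const _ _).prodMk ((hasDerivAt_id _).prodMk (hasDerivAt_const _ _))))

lemma partial_p_eq_fderiv {G Gp : ℝ → ℝ → ℝ → ℝ} (hG : Differentiable ℝ ↿G)
    (hp : ∀ x v p : ℝ, HasDerivAt (fun p' => G x v p') (Gp x v p) p) :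
    ↿Gp = fun q => fderiv ℝ ↿G q (0, 0, 1) := by
  funext ⟨x, v, p⟩
  exact (hp x v p).unique
    (HasFDerivAt.comp_hasDerivAt (f := fun p' => (x, v, p')) p (hG _).hasFDerivAt
      ((hasDerivAt_const _ _).prodMk ((hasDerivAt_const _ _).prodMk (hasDerivAt_id _))))

lemma continuousOn_slice {T : ℝ} {f : ℝ → ℝ → ℝ}
    (hf : ContinuousOn (fun q : ℝ × ℝ => f q.1 q.2) (Ioo (0:ℝ) T ×ˢ Icc (0:ℝ) 1))
    {t : ℝ} (ht : t ∈ Ioo (0:ℝ) T) : ContinuousOn (f t) (Icc (0:ℝ) 1) :=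
  hf.comp (f := fun x => (t, x)) (by fun_prop) (fun _ hx => ⟨ht, hx⟩)

/-- Differentiation under the integral sign for jointly continuous data on `(0,T) × [0,1]`. The
dominating constant is the maximum of the `t`-derivative on a compact time neighbourhood. -/
lemma hasDerivAt_integral_param {T : ℝ} {f f' : ℝ → ℝ → ℝ}
    (hd : ∀ t ∈ Ioo (0:ℝ) T, ∀ x ∈ Icc (0:ℝ) 1, HasDerivAt (fun s => f s x) (f' t x) t)
    (hf : ContinuousOn (fun q : ℝ × ℝ => f q.1 q.2) (Ioo (0:ℝ) T ×ˢ Icc (0:ℝ) 1))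
    (hf' : ContinuousOn (fun q : ℝ × ℝ => f' q.1 q.2) (Ioo (0:ℝ) T ×ˢ Icc (0:ℝ) 1))
    {t : ℝ} (ht : t ∈ Ioo (0:ℝ) T) {b : ℝ} (hb : b ∈ Icc (0:ℝ) 1) :
    HasDerivAt (fun s => ∫ x in (0:ℝ)..b, f s x) (∫ x in (0:ℝ)..b, f' t x) t := by
  have hsub : uIcc 0 b ⊆ Icc (0:ℝ) 1 := by
    rw [uIcc_of_le hb.1]; exact Icc_subset_Icc_right hb.2
  have hIntg : ∀ {g : ℝ → ℝ → ℝ},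
      ContinuousOn (fun q : ℝ × ℝ => g q.1 q.2) (Ioo (0:ℝ) T ×ˢ Icc (0:ℝ) 1) →
      ∀ s ∈ Ioo (0:ℝ) T, IntervalIntegrable (g s) volume 0 b := fun hg s hs =>
    ((continuousOn_slice hg hs).mono hsub).intervalIntegrable
  obtain ⟨c, hc0, hct⟩ := exists_between ht.1
  obtain ⟨d, hdt, hdT⟩ := exists_between ht.2
  have hcd : Icc c d ⊆ Ioo (0:ℝ) T := fun s hs => ⟨hc0.trans_le hs.1, hs.2.trans_lt hdT⟩
  obtain ⟨M, hM⟩ := (isCompact_Icc.prod isCompact_Icc).exists_bound_of_continuousOn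
    (hf'.mono (prod_mono hcd (subset_refl (Icc (0:ℝ) 1))))
  have hnhds : Icc c d ∈ 𝓝 t := Icc_mem_nhds hct hdt
  refine (intervalIntegral.hasDerivAt_integral_of_dominated_loc_of_deriv_le
    (bound := fun _ => M) hnhds ?_ (hIntg hf t ht) ?_ ?_ intervalIntegrable_const ?_).2
  · filter_upwards [hnhds] with s hs
    exact (hIntg hf s (hcd hs)).aestronglyMeasurable_restrict_uIoc
  · exact (hIntg hf' t ht).aestronglyMeasurable_restrict_uIoc
  · exact Filter.Eventually.of_forall fun x hx s hs =>
      hM (s, x) ⟨hs, hsub (uIoc_subset_uIcc hx)⟩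
  · exact Filter.Eventually.of_forall fun x hx s hs =>
      hd s (hcd hs) x (hsub (uIoc_subset_uIcc hx))

/-- Symmetry of mixed derivatives: `∂_x u_t = ∂_t u_x` in the interior, when `u_x` and `∂_t u_x` are
jointly continuous; the existence of `∂_x u_t` is part of the conclusion. -/
lemma hasDerivAt_mixed {T : ℝ} {u ut ux utx : ℝ → ℝ → ℝ}
    (hut : ∀ t ∈ Ioo (0:ℝ) T, ∀ x ∈ Icc (0:ℝ) 1,
      HasDerivAt (fun s => u s x) (ut t x) t)
    (hux : ∀ t ∈ Ioo (0:ℝ) T, ∀ x ∈ Icc (0:ℝ) 1,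
      HasDerivWithinAt (fun y => u t y) (ux t x) (Icc (0:ℝ) 1) x)
    (hutx : ∀ t ∈ Ioo (0:ℝ) T, ∀ x ∈ Icc (0:ℝ) 1,
      HasDerivAt (fun s => ux s x) (utx t x) t)
    (huxcont : ContinuousOn (fun q : ℝ × ℝ => ux q.1 q.2) (Ioo (0:ℝ) T ×ˢ Icc (0:ℝ) 1))
    (hutxcont : ContinuousOn (fun q : ℝ × ℝ => utx q.1 q.2) (Ioo (0:ℝ) T ×ˢ Icc (0:ℝ) 1))
    {t : ℝ} (ht : t ∈ Ioo (0:ℝ) T) {x : ℝ} (hx : x ∈ Ioo (0:ℝ) 1) :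
    HasDerivAt (ut t) (utx t x) x := by
  have key : ∀ y ∈ Icc (0:ℝ) 1, ut t y = ut t 0 + ∫ z in (0:ℝ)..y, utx t z := by
    intro y hy
    have hsub : Icc 0 y ⊆ Icc (0:ℝ) 1 := Icc_subset_Icc_right hy.2
    have h1 := hasDerivAt_integral_param hutx huxcont hutxcont ht hy
    have h2 : HasDerivAt (fun s => u s y - u s 0) (ut t y - ut t 0) t :=
      (hut t ht y hy).sub (hut t ht 0 (by simp))
    have h3 : (fun s => u s y - u s 0) =ᶠ[𝓝 t] fun s => ∫ z in (0:ℝ)..y, ux s z := by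
      filter_upwards [Ioo_mem_nhds ht.1 ht.2] with s hs
      refine (intervalIntegral.integral_eq_sub_of_hasDerivAt_of_le hy.1
        (fun z hz => ((hux s hs z (hsub hz)).continuousWithinAt).mono hsub) (fun z hz => ?_)
        ?_).symm
      · exact (hux s hs z (hsub (Ioo_subset_Icc_self hz))).hasDerivAt
          (Icc_mem_nhds hz.1 (hz.2.trans_le hy.2))
      · apply ContinuousOn.intervalIntegrable
        rw [uIcc_of_le hy.1]
        exact (continuousOn_slice huxcont hs).mono hsub
    have h4 := h2.unique (h1.congr_of_eventuallyEq h3)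
    linarith
  have hc := continuousOn_slice hutxcont ht
  have hi : IntervalIntegrable (utx t) volume 0 x := by
    apply ContinuousOn.intervalIntegrable
    rw [uIcc_of_le hx.1.le]
    exact hc.mono (Icc_subset_Icc_right hx.2.le)
  have hD := (intervalIntegral.integral_hasDerivAt_right hi
    ((hc.mono Ioo_subset_Icc_self).stronglyMeasurableAtFilter isOpen_Ioo x hx)
    (hc.continuousAt (Icc_mem_nhds hx.1 hx.2))).const_add (ut t 0)
  refine hD.congr_of_eventuallyEq ?_
  filter_upwards [Icc_mem_nhds hx.1 hx.2] with y hy using key y hy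

/-- Lyapunov property. Under the hypotheses of the energy decay identity,
if additionally `L_pp(x,u,p) > 0` and `F¹(x,u,p,r) > 0` for all arguments, then for every
`t ∈ (0,T)` the energy `E(t) = ∫₀¹ L(x,u,u_x) dx` has a derivative `E′(t) ≤ 0`, with
`E′(t) = 0` if and only if `u_t(t,x) = 0` for all `x ∈ [0,1]`. -/
theorem lyapunov_strict_decay
    (F0 : ℝ → ℝ → ℝ → ℝ) (F1 : ℝ → ℝ → ℝ → ℝ → ℝ)
    (hF0c : Continuous ↿F0) (hF1c : Continuous ↿F1)
    (L Lu Lp Lpx Lpu Lpp : ℝ → ℝ → ℝ → ℝ)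
    (hLC2 : ContDiff ℝ 2 ↿L)
    (hLu : ∀ x v p : ℝ, HasDerivAt (fun v' => L x v' p) (Lu x v p) v)
    (hLp : ∀ x v p : ℝ, HasDerivAt (fun p' => L x v p') (Lp x v p) p)
    (hLpx : ∀ x v p : ℝ, HasDerivAt (fun x' => Lp x' v p) (Lpx x v p) x)
    (hLpu : ∀ x v p : ℝ, HasDerivAt (fun v' => Lp x v' p) (Lpu x v p) v)
    (hLpp : ∀ x v p : ℝ, HasDerivAt (fun p' => Lp x v p') (Lpp x v p) p)
    (hEuler : ∀ x ∈ Icc (0:ℝ) 1, ∀ v p : ℝ,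
      Lu x v p - Lpx x v p - p * Lpu x v p - F0 x v p * Lpp x v p = 0)
    (hLpp_pos : ∀ x v p : ℝ, 0 < Lpp x v p)
    (hF1_pos : ∀ x v p r : ℝ, 0 < F1 x v p r)
    (T : ℝ) (hT : 0 < T)
    (u ut ux uxx utx : ℝ → ℝ → ℝ)
    (hut : ∀ t ∈ Ioo (0:ℝ) T, ∀ x ∈ Icc (0:ℝ) 1,
      HasDerivAt (fun s => u s x) (ut t x) t)
    (hux : ∀ t ∈ Ioo (0:ℝ) T, ∀ x ∈ Icc (0:ℝ) 1,
      HasDerivWithinAt (fun y => u t y) (ux t x) (Icc (0:ℝ) 1) x)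
    (huxx : ∀ t ∈ Ioo (0:ℝ) T, ∀ x ∈ Icc (0:ℝ) 1,
      HasDerivWithinAt (fun y => ux t y) (uxx t x) (Icc (0:ℝ) 1) x)
    (hutx : ∀ t ∈ Ioo (0:ℝ) T, ∀ x ∈ Icc (0:ℝ) 1,
      HasDerivAt (fun s => ux s x) (utx t x) t)
    (hucont : ContinuousOn (fun q : ℝ × ℝ => u q.1 q.2) (Ioo (0:ℝ) T ×ˢ Icc (0:ℝ) 1))
    (hutcont : ContinuousOn (fun q : ℝ × ℝ => ut q.1 q.2) (Ioo (0:ℝ) T ×ˢ Icc (0:ℝ) 1))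
    (huxcont : ContinuousOn (fun q : ℝ × ℝ => ux q.1 q.2) (Ioo (0:ℝ) T ×ˢ Icc (0:ℝ) 1))
    (huxxcont : ContinuousOn (fun q : ℝ × ℝ => uxx q.1 q.2) (Ioo (0:ℝ) T ×ˢ Icc (0:ℝ) 1))
    (hutxcont : ContinuousOn (fun q : ℝ × ℝ => utx q.1 q.2) (Ioo (0:ℝ) T ×ˢ Icc (0:ℝ) 1))
    (hbdd : ∃ C : ℝ, ∀ t ∈ Ioo (0:ℝ) T, ∀ x ∈ Icc (0:ℝ) 1,
      |u t x| ≤ C ∧ |ut t x| ≤ C ∧ |ux t x| ≤ C ∧ |uxx t x| ≤ C ∧ |utx t x| ≤ C)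
    (hPDE : ∀ t ∈ Ioo (0:ℝ) T, ∀ x ∈ Icc (0:ℝ) 1,
      uxx t x = F0 x (u t x) (ux t x)
        + F1 x (u t x) (ux t x) (ut t x) * ut t x)
    (hBC : ∀ t ∈ Ioo (0:ℝ) T,
      Lp 0 (u t 0) (ux t 0) * ut t 0 = 0 ∧
      Lp 1 (u t 1) (ux t 1) * ut t 1 = 0) :
    ∀ t ∈ Ioo (0:ℝ) T,
      ∃ E' : ℝ,
        HasDerivAt (fun s => ∫ x in (0:ℝ)..1, L x (u s x) (ux s x)) E' t ∧
        E' ≤ 0 ∧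
        (E' = 0 ↔ ∀ x ∈ Icc (0:ℝ) 1, ut t x = 0) := by
  intro t ht
  have hLd : Differentiable ℝ ↿L := hLC2.differentiable (by norm_num)
  have hdL : ContDiff ℝ 1 (fderiv ℝ ↿L) := hLC2.fderiv_right (by norm_num)
  have hLp1 : ContDiff ℝ 1 ↿Lp := by
    rw [partial_p_eq_fderiv hLd hLp]; exact hdL.clm_apply contDiff_const
  have hLuc : Continuous ↿Lu := by
    rw [partial_v_eq_fderiv hLd hLu]; exact (hdL.clm_apply contDiff_const).continuous
  have hLpd : Differentiable ℝ ↿Lp := hLp1.differentiable (by norm_num)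
  have hLppc : Continuous ↿Lpp := by
    rw [partial_p_eq_fderiv hLpd hLpp]
    exact (hLp1.continuous_fderiv (by norm_num)).clm_apply continuous_const
  -- joint continuity of a function of `(x, u, u_x)` along the solution
  have hcomp : ∀ G : ℝ → ℝ → ℝ → ℝ, Continuous ↿G →
      ContinuousOn (fun q : ℝ × ℝ => G q.2 (u q.1 q.2) (ux q.1 q.2))
        (Ioo (0:ℝ) T ×ˢ Icc (0:ℝ) 1) := fun G hG =>
    hG.comp_continuousOn
      (f := fun q : ℝ × ℝ => (q.2, u q.1 q.2, ux q.1 q.2))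
      (continuousOn_snd.prodMk (hucont.prodMk huxcont))
  let e' : ℝ → ℝ → ℝ := fun s x =>
    Lu x (u s x) (ux s x) * ut s x + Lp x (u s x) (ux s x) * utx s x
  have he'c : ContinuousOn (fun q : ℝ × ℝ => e' q.1 q.2) (Ioo (0:ℝ) T ×ˢ Icc (0:ℝ) 1) :=
    ((hcomp Lu hLuc).mul hutcont).add ((hcomp Lp hLp1.continuous).mul hutxcont)
  have hE := hasDerivAt_integral_param (f := fun s x => L x (u s x) (ux s x)) (f' := e')
    (fun s hs x hx => by
      have hLx : HasDerivAt (fun x' => L x' (u s x) (ux s x))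
          (fderiv ℝ ↿L (x, u s x, ux s x) (1, 0, 0)) x :=
        HasFDerivAt.comp_hasDerivAt (f := fun x' => (x', u s x, ux s x)) x
          (hLd _).hasFDerivAt
          ((hasDerivAt_id _).prodMk ((hasDerivAt_const _ _).prodMk (hasDerivAt_const _ _)))
      have h := chain_three hLd (X := fun _ => x) (V := fun r => u r x) (P := fun r => ux r x)
        (s := s) hLx (hLu _ _ _) (hLp _ _ _) (hasDerivAt_const s x) (hut s hs x hx)
        (hutx s hs x hx)
      simpa only [mul_zero, zero_add] using h)
    (hcomp L hLC2.continuous) he'c ht (b := 1) (by simp)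
  let g : ℝ → ℝ := fun x =>
    Lpp x (u t x) (ux t x) * F1 x (u t x) (ux t x) (ut t x) * ut t x ^ 2
  have hgc : ContinuousOn g (Icc 0 1) := by
    have h1 := continuousOn_slice
      (f := fun s x => Lpp x (u s x) (ux s x)) (hcomp Lpp hLppc) ht
    have hutc := continuousOn_slice hutcont ht
    have h2 : ContinuousOn (fun x => F1 x (u t x) (ux t x) (ut t x)) (Icc 0 1) :=
      hF1c.comp_continuousOn (f := fun x => (x, u t x, ux t x, ut t x))
        (continuousOn_id.prodMk ((continuousOn_slice hucont ht).prodMk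
          ((continuousOn_slice huxcont ht).prodMk hutc)))
    exact (h1.mul h2).mul (hutc.pow 2)
  have hIntg : ∀ {h : ℝ → ℝ}, ContinuousOn h (Icc 0 1) → IntervalIntegrable h volume 0 1 :=
    fun hh => ContinuousOn.intervalIntegrable (by rwa [uIcc_of_le zero_le_one])
  have hg0 : ∀ x, 0 ≤ g x := fun x =>
    mul_nonneg (mul_pos (hLpp_pos _ _ _) (hF1_pos _ _ _ _)).le (sq_nonneg _)
  have he'i := hIntg (continuousOn_slice he'c ht)
  have hgi := hIntg hgc
  -- `L_p u_t` is an antiderivative of `e' + g`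
  have hW : ∫ x in (0:ℝ)..1, (e' t x + g x) = 0 := by
    have hFTC := intervalIntegral.integral_eq_sub_of_hasDerivAt_of_le
      (f := fun x => Lp x (u t x) (ux t x) * ut t x) (f' := fun x => e' t x + g x)
      zero_le_one
      ((continuousOn_slice (f := fun s x => Lp x (u s x) (ux s x))
        (hcomp Lp hLp1.continuous) ht).mul (continuousOn_slice hutcont ht))
      (fun x hx => by
        have hx' := Ioo_subset_Icc_self hx
        have hn : Icc (0:ℝ) 1 ∈ 𝓝 x := Icc_mem_nhds hx.1 hx.2
        have h := (chain_three hLpd (X := fun y => y) (V := u t) (P := ux t) (s := x)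
          (hLpx _ _ _) (hLpu _ _ _) (hLpp _ _ _) (hasDerivAt_id x)
          ((hux t ht x hx').hasDerivAt hn) ((huxx t ht x hx').hasDerivAt hn)).mul
          (hasDerivAt_mixed hut hux hutx huxcont hutxcont ht hx)
        refine h.congr_deriv ?_
        simp only [e', g]
        rw [hPDE t ht x hx']
        linear_combination (-ut t x) * hEuler x hx' (u t x) (ux t x))
      (he'i.add hgi)
    rw [hFTC, (hBC t ht).1, (hBC t ht).2, sub_zero]
  have hE' : ∫ x in (0:ℝ)..1, e' t x = -∫ x in (0:ℝ)..1, g x := by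
    rw [intervalIntegral.integral_add he'i hgi] at hW
    linarith
  rw [hE'] at hE
  refine ⟨_, hE, neg_nonpos.2 (intervalIntegral.integral_nonneg zero_le_one fun x _ => hg0 x),
    ?_, ?_⟩
  · intro h0 x hx
    by_contra hne
    have hpos : 0 < ∫ x in (0:ℝ)..1, g x :=
      intervalIntegral.integral_pos zero_lt_one hgc (fun y _ => hg0 y)
        ⟨x, hx, mul_pos (mul_pos (hLpp_pos _ _ _) (hF1_pos _ _ _ _)) (by positivity)⟩
    linarith
  · intro h0
    rw [neg_eq_zero]
    refine (intervalIntegral.integral_congr fun x hx => ?_).trans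
      (intervalIntegral.integral_zero (a := 0) (b := 1))
    rw [uIcc_of_le zero_le_one] at hx
    simp only [g, h0 x hx]
    ring
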